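/- arXiv:1010.4692 — 2 statements merged into one kernel-verified Lean document; each statement's English description precedes it below -/
import Mathlib

section
/- Let 1 ≤ r ≤ e ≤ q be positive integers with r + e + q = n, let P_1 = (x_1,…,x_r), P_2 = (x_{r+1},…,x_{r+e}), P_3 = (x_{r+e+1},…,x_{r+e+q}) be prime ideals of S = K[x_1,…,x_n], and let I = P_1 ∩ P_2 ∩ P_3. If r ≤ ⌈e/2⌉, then sdepth_S(S/I) = r + min{ e, ⌈q/2⌉ }. -/
open MvPolynomial

/-- The Stanley space `u·K[Z]` inside the polynomial ring `K[x_i : i ∈ σ]`: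
the `K`-span of all monomials `x^(u+v)` with `supp v ⊆ Z`. -/
noncomputable def stanleySpace (K : Type*) [Field K] {σ : Type*} (u : σ →₀ ℕ) (Z : Set σ) :
    Submodule K (MvPolynomial σ K) :=
  Submodule.span K
    ((fun v : σ →₀ ℕ => (monomial (u + v) (1 : K) : MvPolynomial σ K)) ''
      {v | (v.support : Set σ) ⊆ Z})

/-- `(u, Z)` (indexed by a finite type `ι`) is a Stanley decomposition of the monomial
ideal `I`: the Stanley spaces `x^(u i)·K[Z i]` are independent and their (direct) sum is `I`
as a `K`-vector space.  (Inside the polynomial ring each Stanley space is automatically a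
free `K[Z]`-module.) -/
def IsStanleyDecompOfIdeal {K σ : Type*} [Field K] {ι : Type} [Fintype ι]
    (I : Ideal (MvPolynomial σ K)) (u : ι → (σ →₀ ℕ)) (Z : ι → Finset σ) : Prop :=
  iSupIndep (fun i => stanleySpace K (u i) (Z i)) ∧
    (⨆ i, stanleySpace K (u i) (Z i)) = Submodule.restrictScalars K I

/-- The Stanley depth of a monomial ideal `I`: the largest `d` such that there is a Stanley
decomposition of `I` all of whose Stanley spaces `u_i K[Z_i]` satisfy `|Z_i| ≥ d`. -/
noncomputable def sdepthIdeal {K σ : Type*} [Field K] (I : Ideal (MvPolynomial σ K)) : ℕ :=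
  sSup {d | ∃ (ι : Type) (_ : Fintype ι) (_ : Nonempty ι) (u : ι → (σ →₀ ℕ))
    (Z : ι → Finset σ), IsStanleyDecompOfIdeal I u Z ∧ ∀ i, d ≤ (Z i).card}

/-- `(u, Z)` is a Stanley decomposition of `S/I`:  each Stanley space `x^(u i)·K[Z i]` meets
`I` trivially (equivalently, its image in `S/I` is a free `K[Z i]`-module), the images of the
Stanley spaces in `S/I` are independent, and they sum to `S/I`. -/
def IsStanleyDecompOfQuotient {K σ : Type*} [Field K] {ι : Type} [Fintype ι]
    (I : Ideal (MvPolynomial σ K)) (u : ι → (σ →₀ ℕ)) (Z : ι → Finset σ) : Prop :=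
  (∀ i, Disjoint (stanleySpace K (u i) (Z i)) (Submodule.restrictScalars K I)) ∧
    iSupIndep (fun i =>
      (stanleySpace K (u i) (Z i)).map (Ideal.Quotient.mkₐ K I).toLinearMap) ∧
    (⨆ i, (stanleySpace K (u i) (Z i)).map (Ideal.Quotient.mkₐ K I).toLinearMap) = ⊤

/-- The Stanley depth of `S/I` for a monomial ideal `I`. -/
noncomputable def sdepthQuot {K σ : Type*} [Field K] (I : Ideal (MvPolynomial σ K)) : ℕ :=
  sSup {d | ∃ (ι : Type) (_ : Fintype ι) (_ : Nonempty ι) (u : ι → (σ →₀ ℕ))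
    (Z : ι → Finset σ), IsStanleyDecompOfQuotient I u Z ∧ ∀ i, d ≤ (Z i).card}

/-- A monomial ideal: an ideal generated by monomials. -/
def IsMonomialIdeal {K σ : Type*} [Field K] (I : Ideal (MvPolynomial σ K)) : Prop :=
  ∃ A : Set (σ →₀ ℕ), I = Ideal.span ((fun a => (monomial a (1 : K) : MvPolynomial σ K)) '' A)

/-- The (exponents of the) minimal monomial generators of a monomial ideal `I`:
monomials in `I` that are not proper multiples of monomials in `I`. -/
def minimalGenerators {K σ : Type*} [Field K] (I : Ideal (MvPolynomial σ K)) :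
    Set (σ →₀ ℕ) :=
  {a | (monomial a (1 : K) : MvPolynomial σ K) ∈ I ∧
    ∀ b < a, (monomial b (1 : K) : MvPolynomial σ K) ∉ I}

/-- The depth (w.r.t. the maximal graded ideal `m = (x_1,…,x_n)`) of a module `M` over the
polynomial ring: the maximal length of a regular sequence on `M` consisting of elements
of `m`. -/
noncomputable def mdepth (K σ : Type*) [Field K] (M : Type*) [AddCommGroup M]
    [Module (MvPolynomial σ K) M] : ℕ :=
  sSup {k | ∃ rs : List (MvPolynomial σ K), rs.length = k ∧
    (∀ r ∈ rs, r ∈ Ideal.span (Set.range (X : σ → MvPolynomial σ K))) ∧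
    RingTheory.Sequence.IsRegular M rs}

/-- The height of a prime ideal: the height of the corresponding point
of the prime spectrum, i.e. the supremum of lengths of chains of primes below it. -/
noncomputable def primeHt {R : Type*} [CommRing R] (P : Ideal R) (hP : P.IsPrime) : ℕ∞ :=
  Order.height (⟨P, hP⟩ : PrimeSpectrum R)


/-- An interval partition, with tops of size at least `d`, of the nonempty subsets of `C`. -/
def HasIP {σ : Type} [DecidableEq σ] (C : Finset σ) (d : ℕ) : Prop :=
  ∃ (ι : Type) (_ : Fintype ι) (X Y : ι → Finset σ),
    (∀ i, X i ⊆ Y i) ∧ (∀ i, Y i ⊆ C) ∧ (∀ i, (X i).Nonempty) ∧ (∀ i, d ≤ (Y i).card) ∧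
    (∀ T : Finset σ, T ⊆ C → T.Nonempty → ∃ i, X i ⊆ T ∧ T ⊆ Y i) ∧
    (∀ (T : Finset σ) i j, X i ⊆ T → T ⊆ Y i → X j ⊆ T → T ⊆ Y j → i = j)

def wrd (T : ℕ → Prop) [DecidablePred T] (c : Bool) : ℕ → Bool
  | 0 => c
  | j + 1 => if T j then true else !(wrd T c j)

lemma wrd_congr (T : ℕ → Prop) [DecidablePred T] (c c' : Bool) (p : ℕ) (hp : T p) :
    ∀ n, p < n → wrd T c n = wrd T c' n := by
  intro n hn
  induction n with
  | zero => omega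
  | succ m ih =>
    simp only [wrd]
    by_cases h : T m
    · simp [h]
    · have : p ≠ m := by rintro rfl; exact h hp
      rw [ih (by omega)]

lemma hasIP_fin_odd (k : ℕ) : HasIP (Finset.univ : Finset (Fin (2 * k + 1))) (k + 1) := by
  classical
  refine ⟨{a : Fin (2 * k + 1 + 1) → Bool // a 0 = a (Fin.last _) ∧
      ∀ p : Fin (2 * k + 1), a p.castSucc = true ∨ a p.succ = true}, inferInstance,
    fun a => Finset.univ.filter fun p => a.1 p.castSucc = true ∧ a.1 p.succ = true,
    fun a => Finset.univ.filter fun p => a.1 p.succ = true, ?_, ?_, ?_, ?_, ?_, ?_⟩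
  · intro a p; simp
  · intro a; simp
  · rintro ⟨a, h0, ha⟩
    by_contra hne
    rw [Finset.not_nonempty_iff_eq_empty] at hne
    have hs : ∀ p : Fin (2 * k + 1), a p.succ = !(a p.castSucc) := by
      intro p
      have h1 := ha p
      have h2 : p ∉ (∅ : Finset (Fin (2 * k + 1))) := by simp
      rw [← hne] at h2
      simp only [Finset.mem_filter, Finset.mem_univ, true_and] at h2
      cases h : a p.succ <;> cases h' : a p.castSucc <;> simp_all
    have key : ∀ j (hj : j < 2 * k + 1 + 1), a ⟨j, hj⟩ = (a 0 ^^ decide (j % 2 = 1)) := by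
      intro j
      induction j with
      | zero => intro hj; simp
      | succ m ih =>
        intro hj
        have := hs ⟨m, by omega⟩
        simp only [Fin.succ_mk, Fin.castSucc_mk] at this
        rw [this, ih (by omega)]
        rcases Nat.mod_two_eq_zero_or_one m with h | h
        · have h' : (m + 1) % 2 = 1 := by omega
          simp [h, h']
        · have h' : (m + 1) % 2 = 0 := by omega
          simp [h, h']
    have h := key (2 * k + 1) (by omega)
    have h' : (2 * k + 1) % 2 = 1 := by omega
    change a (Fin.last _) = _ at h
    rw [← h0] at h
    simp [h'] at h
  · rintro ⟨a, h0, ha⟩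
    simp only
    -- count
    have hc : (Finset.univ.filter fun p : Fin (2 * k + 1) => a p.succ = true).card
        = (Finset.univ.filter fun p : Fin (2 * k + 1) => a p.castSucc = true).card := by
      simp only [Finset.card_filter]
      have e1 := Fin.sum_univ_succ (fun i : Fin (2 * k + 1 + 1) => if a i = true then 1 else 0)
      have e2 := Fin.sum_univ_castSucc (fun i : Fin (2 * k + 1 + 1) => if a i = true then 1 else 0)
      rw [h0] at e1
      omega
    have hu : (Finset.univ.filter fun p : Fin (2 * k + 1) => a p.succ = true) ∪
        (Finset.univ.filter fun p : Fin (2 * k + 1) => a p.castSucc = true) = Finset.univ := by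
      ext p; simpa using (ha p).symm
    have h1 := Finset.card_union_le
      (Finset.univ.filter fun p : Fin (2 * k + 1) => a p.succ = true)
      (Finset.univ.filter fun p : Fin (2 * k + 1) => a p.castSucc = true)
    rw [hu, Finset.card_univ, Fintype.card_fin] at h1
    omega
  · rintro T - ⟨p, hp⟩
    let T' : ℕ → Prop := fun j => ∃ h : j < 2 * k + 1, (⟨j, h⟩ : Fin _) ∈ T
    have hT' : ∀ p : Fin (2 * k + 1), T' p ↔ p ∈ T := by
      intro p; exact ⟨fun ⟨_, h⟩ => h, fun h => ⟨p.2, h⟩⟩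
    have hw := wrd_congr T' true false p ((hT' p).2 hp) (2 * k + 1) p.2
    obtain ⟨c, hc⟩ : ∃ c, wrd T' c (2 * k + 1) = c := by
      cases h : wrd T' true (2 * k + 1)
      · exact ⟨false, by rw [← hw, h]⟩
      · exact ⟨true, h⟩
    have hstep : ∀ p : Fin (2 * k + 1), wrd T' c (p + 1) =
        if p ∈ T then true else !(wrd T' c p) := by
      intro p
      simp only [wrd, hT']
    refine ⟨⟨fun j => wrd T' c j, by simpa [wrd] using hc.symm, ?_⟩, ?_, ?_⟩
    · intro p
      simp only [Fin.val_castSucc, Fin.val_succ, hstep]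
      split_ifs <;> simp
    · intro p
      simp only [Finset.mem_filter, Finset.mem_univ, true_and, Fin.val_castSucc, Fin.val_succ, hstep]
      split_ifs <;> simp_all
    · intro p hp
      simp only [Finset.mem_filter, Finset.mem_univ, true_and, Fin.val_succ, hstep]
      simp [hp]
  · rintro T ⟨a, a0, ha⟩ ⟨b, b0, hb⟩ h1 h2 h3 h4
    have stp : ∀ a : Fin (2 * k + 1 + 1) → Bool,
        (∀ p : Fin (2 * k + 1), a p.castSucc = true ∨ a p.succ = true) →
        (Finset.univ.filter fun p : Fin (2 * k + 1) => a p.castSucc = true ∧ a p.succ = true) ⊆ T →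
        T ⊆ (Finset.univ.filter fun p : Fin (2 * k + 1) => a p.succ = true) →
        ∀ p : Fin (2 * k + 1), a p.succ = if p ∈ T then true else !(a p.castSucc) := by
      intro a ha h1 h2 p
      have h0 := ha p
      have h1' := @h1 p
      have h2' := @h2 p
      simp only [Finset.mem_filter, Finset.mem_univ, true_and] at h1' h2'
      split_ifs with h
      · exact h2' h
      · cases h3 : a p.castSucc <;> cases h4 : a p.succ <;> simp_all
    have sa := stp a ha h1 h2
    have sb := stp b hb h3 h4
    -- propagate
    have prop : a 0 = b 0 → ∀ j (hj : j < 2 * k + 1 + 1), a ⟨j, hj⟩ = b ⟨j, hj⟩ := by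
      intro h j
      induction j with
      | zero => intro _; exact h
      | succ m ih =>
        intro hj
        have ea := sa ⟨m, by omega⟩
        have eb := sb ⟨m, by omega⟩
        simp only [Fin.succ_mk, Fin.castSucc_mk] at ea eb
        rw [ea, eb, ih]
    have h00 : a 0 = b 0 := by
      by_contra hne
      -- once equal stays equal
      have stay : ∀ j (hj : j < 2 * k + 1 + 1), a ⟨j, hj⟩ = b ⟨j, hj⟩ →
          ∀ l (hl : l < 2 * k + 1 + 1), j ≤ l → a ⟨l, hl⟩ = b ⟨l, hl⟩ := by
        intro j hj h l
        induction l with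
        | zero => intro hl hjl; obtain rfl : j = 0 := by omega
                  exact h
        | succ m ih =>
          intro hl hjl
          by_cases hjm : j = m + 1
          · subst hjm; exact h
          have ea := sa ⟨m, by omega⟩
          have eb := sb ⟨m, by omega⟩
          simp only [Fin.succ_mk, Fin.castSucc_mk] at ea eb
          rw [ea, eb, ih (by omega) (by omega)]
      by_cases hT : ∃ p, p ∈ T
      · obtain ⟨p, hp⟩ := hT
        have ea := sa p
        have eb := sb p
        simp only [hp, if_true] at ea eb
        have := stay (p + 1) (by omega) (by
          change a p.succ = b p.succ
          rw [ea, eb]) (2 * k + 1) (by omega) (by omega)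
        apply hne
        rw [a0, b0]; exact this
      · push Not at hT
        have key : ∀ j (hj : j < 2 * k + 1 + 1), a ⟨j, hj⟩ = (a 0 ^^ decide (j % 2 = 1)) := by
          intro j
          induction j with
          | zero => intro hj; simp
          | succ m ih =>
            intro hj
            have := sa ⟨m, by omega⟩
            simp only [Fin.succ_mk, Fin.castSucc_mk, hT, if_false] at this
            rw [this, ih (by omega)]
            rcases Nat.mod_two_eq_zero_or_one m with h | h
            · have h' : (m + 1) % 2 = 1 := by omega
              simp [h, h']
            · have h' : (m + 1) % 2 = 0 := by omega
              simp [h, h']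
        have h := key (2 * k + 1) (by omega)
        have h' : (2 * k + 1) % 2 = 1 := by omega
        change a (Fin.last _) = _ at h
        rw [← a0] at h
        simp [h'] at h
    apply Subtype.ext
    funext ⟨j, hj⟩
    exact prop h00 j hj

lemma HasIP.map {σ τ : Type} [DecidableEq σ] [DecidableEq τ] {C : Finset σ} {d : ℕ}
    (h : HasIP C d) (f : σ ↪ τ) : HasIP (C.map f) d := by
  obtain ⟨ι, _, X, Y, h1, h2, h3, h4, h5, h6⟩ := h
  refine ⟨ι, inferInstance, fun i => (X i).map f, fun i => (Y i).map f, ?_, ?_, ?_, ?_, ?_, ?_⟩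
  · intro i; simpa using h1 i
  · intro i; simpa using h2 i
  · intro i; simpa using h3 i
  · intro i; simpa using h4 i
  · intro T hT hne
    obtain ⟨T', hT', rfl⟩ := Finset.subset_map_iff.1 hT
    obtain ⟨i, hi⟩ := h5 T' hT' (by simpa using hne)
    exact ⟨i, by simpa using hi⟩
  · intro T i j a b c d
    obtain ⟨T', hT', rfl⟩ := Finset.subset_map_iff.1 b
    simp only [Finset.map_subset_map] at a b c d
    exact h6 T' i j a b c d

lemma HasIP.insert {σ : Type} [DecidableEq σ] {C : Finset σ} {d : ℕ} {y : σ} (hy : y ∉ C)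
    (h : HasIP C d) (hd : d ≤ C.card + 1) : HasIP (insert y C) d := by
  obtain ⟨ι, _, X, Y, h1, h2, h3, h4, h5, h6⟩ := h
  refine ⟨Option ι, inferInstance, fun i => i.elim {y} X, fun i => i.elim (Insert.insert y C) Y,
    ?_, ?_, ?_, ?_, ?_, ?_⟩
  · rintro (_ | i)
    · simp
    · exact h1 i
  · rintro (_ | i)
    · simp
    · exact (h2 i).trans (Finset.subset_insert _ _)
  · rintro (_ | i)
    · simp
    · exact h3 i
  · rintro (_ | i)
    · simpa [hy] using hd
    · exact h4 i
  · intro T hT hne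
    by_cases hyT : y ∈ T
    · exact ⟨none, by simpa using hyT, hT⟩
    · obtain ⟨i, hi⟩ := h5 T ((Finset.subset_insert_iff_of_notMem hyT).1 hT) hne
      exact ⟨some i, hi⟩
  · rintro T (_ | i) (_ | j) a b c d
    · rfl
    · exact absurd (h2 j (d (a (by simp)))) hy
    · exact absurd (h2 i (b (c (by simp)))) hy
    · rw [h6 T i j a b c d]

lemma hasIP {σ : Type} [DecidableEq σ] (C : Finset σ) : HasIP C ((C.card + 1) / 2) := by
  have odd : ∀ (C : Finset σ) (k : ℕ), C.card = 2 * k + 1 → HasIP C (k + 1) := by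
    intro C k hC
    have h := (hasIP_fin_odd k).map ((finCongr hC.symm).toEmbedding.trans
      (C.equivFin.symm.toEmbedding.trans (Function.Embedding.subtype _)))
    convert h using 1
    ext x
    simp only [Finset.mem_map, Finset.mem_univ, true_and, Function.Embedding.trans_apply,
      Equiv.coe_toEmbedding, Function.Embedding.subtype_apply]
    constructor
    · intro hx
      exact ⟨finCongr hC (C.equivFin ⟨x, hx⟩), by simp⟩
    · rintro ⟨i, rfl⟩
      exact Subtype.property _
  rcases Nat.even_or_odd' C.card with ⟨k, hk | hk⟩
  · rcases k with _ | k
    · obtain rfl : C = ∅ := by simpa using hk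
      refine ⟨Empty, inferInstance, fun i => i.elim, fun i => i.elim, ?_, ?_, ?_, ?_, ?_, ?_⟩
      · rintro ⟨⟩
      · rintro ⟨⟩
      · rintro ⟨⟩
      · rintro ⟨⟩
      · intro T hT hne
        obtain ⟨x, hx⟩ := hne
        exact absurd (hT hx) (by simp)
      · rintro T ⟨⟩
    · obtain ⟨y, hy⟩ : C.Nonempty := by rw [← Finset.card_pos]; omega
      have hc : (C.erase y).card = 2 * k + 1 := by rw [Finset.card_erase_of_mem hy]; omega
      have := (odd (C.erase y) k hc).insert (Finset.notMem_erase y C) (by omega)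
      rw [Finset.insert_erase hy] at this
      convert this using 1
      omega
  · convert odd C k hk using 1
    omega

/-- The exponent `a` belongs to the Stanley space `x^u K[Z]`. -/
def MemS {σ : Type*} (u : σ → ℕ) (Z : Finset σ) (a : σ → ℕ) : Prop :=
  (∀ j, u j ≤ a j) ∧ ∀ j, j ∉ Z → a j = u j

/-- The exponent `a` is not an exponent of the ideal. -/
def GoodE {σ : Type*} (A B C : Finset σ) (a : σ → ℕ) : Prop :=
  (∀ j ∈ A, a j = 0) ∨ (∀ j ∈ B, a j = 0) ∨ (∀ j ∈ C, a j = 0)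

lemma upper_aux {σ ι : Type*} [Fintype σ] [DecidableEq σ] (A B C : Finset σ)
    (hAB : Disjoint A B) (hAC : Disjoint A C) (hBC : Disjoint B C)
    (hU : ∀ j, j ∈ A ∨ j ∈ B ∨ j ∈ C) (hA : A.Nonempty) (hC : C.Nonempty)
    (u : ι → σ → ℕ) (Z : ι → Finset σ) (N d : ℕ) (hN : ∀ i j, u i j < N)
    (hd : ∀ i, d ≤ (Z i).card)
    (hgood : ∀ i a, MemS (u i) (Z i) a → GoodE A B C a)
    (hcov : ∀ a, GoodE A B C a → ∃ i, MemS (u i) (Z i) a)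
    (hdis : ∀ i j a, MemS (u i) (Z i) a → MemS (u j) (Z j) a → i = j)
    (i0 : ι) (h0 : MemS (u i0) (Z i0) (fun j => if j ∈ A then N else 0))
    (hZ : Disjoint (Z i0) C) : d ≤ A.card + (C.card + 1) / 2 := by
  rw [Finset.disjoint_left] at hAB hAC hBC hZ
  obtain ⟨a0, ha0⟩ := hA
  have hN0 : 0 < N := lt_of_le_of_lt (Nat.zero_le _) (hN i0 a0)
  let g : σ → σ → ℕ := fun c j => if j ∈ A then N else if j = c then 1 else 0
  have hg : ∀ c : σ, ∃ i, c ∈ C → MemS (u i) (Z i) (g c) := by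
    intro c
    by_cases hc : c ∈ C
    · obtain ⟨i, hi⟩ := hcov (g c) (Or.inr (Or.inl fun j hj => by
        have h1 : j ∉ A := fun h => hAB h hj
        have h2 : j ≠ c := by rintro rfl; exact hBC hj hc
        simp [g, h1, h2]))
      exact ⟨i, fun _ => hi⟩
    · exact ⟨i0, fun h => absurd h hc⟩
  choose I hI using hg
  have hAZ : ∀ c ∈ C, ∀ j ∈ A, j ∈ Z (I c) := by
    intro c hc j hj
    by_contra hn
    have h1 := (hI c hc).2 j hn
    have h2 := hN (I c) j
    simp only [g, hj, if_true] at h1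
    omega
  have hu0 : ∀ c ∈ C, ∀ j, j ∉ A → j ≠ c → u (I c) j = 0 := by
    intro c hc j hj hjc
    have h1 := (hI c hc).1 j
    simp only [g, hj, hjc, if_false] at h1
    omega
  have hu1 : ∀ c ∈ C, u (I c) c = 1 := by
    intro c hc
    have hcA : c ∉ A := fun h => hAC h hc
    have h1 := (hI c hc).1 c
    simp only [g, hcA, if_false, if_true] at h1
    by_contra hne
    have h2 : u (I c) c = 0 := by omega
    have hcZ : c ∈ Z (I c) := by
      by_contra hn
      have h3 := (hI c hc).2 c hn
      simp only [g, hcA, if_false, if_true] at h3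
      omega
    have h4 : MemS (u (I c)) (Z (I c)) (fun j => if j ∈ A then N else 0) := by
      refine ⟨fun j => ?_, fun j hj => ?_⟩
      · by_cases hjA : j ∈ A
        · simpa [hjA] using (hN (I c) j).le
        · by_cases hjc : j = c
          · subst hjc; simp [h2]
          · simp [hu0 c hc j hjA hjc]
      · have hjA : j ∉ A := fun h => hj (hAZ c hc j h)
        have hjc : j ≠ c := by rintro rfl; exact hj hcZ
        simp [hjA, hu0 c hc j hjA hjc]
    have h5 := hdis _ _ _ h4 h0
    rw [h5] at hcZ
    exact hZ hcZ hc
  have hup : ∀ c ∈ C, ∀ b ∈ Z (I c), b ∉ A →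
      MemS (u (I c)) (Z (I c)) (fun j => g c j + if j = b then 1 else 0) := by
    intro c hc b hb hbA
    refine ⟨fun j => ((hI c hc).1 j).trans (Nat.le_add_right _ _), fun j hj => ?_⟩
    have : j ≠ b := by rintro rfl; exact hj hb
    simp only [this, if_false, add_zero]
    exact (hI c hc).2 j hj
  have hZB : ∀ c ∈ C, ∀ b ∈ B, b ∉ Z (I c) := by
    intro c hc b hb hbZ
    have hcA : c ∉ A := fun h => hAC h hc
    rcases hgood _ _ (hup c hc b hbZ (fun h => hAB h hb)) with h | h | h
    · have := h a0 ha0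
      simp only [g, ha0, if_true] at this
      omega
    · have := h b hb
      simp at this
    · have := h c hc
      simp [g, hcA] at this
  have hcard : ∀ c ∈ C, d ≤ A.card + (C.filter (· ∈ Z (I c))).card := by
    intro c hc
    refine (hd (I c)).trans ?_
    refine (Finset.card_le_card ?_).trans (Finset.card_union_le _ _)
    intro j hj
    rcases hU j with h | h | h
    · simp [h]
    · exact absurd hj (hZB c hc j h)
    · simp [h, hj]
  have hpair : ∀ c ∈ C, ∀ c' ∈ C,
      (if c' ∈ Z (I c) then 1 else 0) + (if c ∈ Z (I c') then 1 else 0) ≤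
        1 + (if c = c' then 1 else 0) := by
    intro c hc c' hc'
    by_cases hcc : c = c'
    · simp only [hcc, if_true]; split_ifs <;> omega
    · by_cases h1 : c' ∈ Z (I c)
      · by_cases h2 : c ∈ Z (I c')
        · exfalso
          have hcA : c ∉ A := fun h => hAC h hc
          have hcA' : c' ∉ A := fun h => hAC h hc'
          have m1 := hup c hc c' h1 hcA'
          have m2 := hup c' hc' c h2 hcA
          have he : (fun j => g c j + if j = c' then 1 else 0) =
              (fun j => g c' j + if j = c then 1 else 0) := by
            funext j
            simp only [g]
            by_cases hjA : j ∈ A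
            · have e1 : j ≠ c := by rintro rfl; exact hcA hjA
              have e2 : j ≠ c' := by rintro rfl; exact hcA' hjA
              simp [hjA, e1, e2]
            · simp only [hjA, if_false]; omega
          rw [he] at m1
          have h3 := hdis _ _ _ m1 m2
          have h4 := hu1 c hc
          rw [h3, hu0 c' hc' c hcA hcc] at h4
          omega
        · simp [h1, h2]
      · split_ifs <;> omega
  have hsum := Finset.sum_le_sum fun c hc => Finset.sum_le_sum fun c' hc' => hpair c hc c' hc'
  simp only [Finset.sum_add_distrib] at hsum
  rw [Finset.sum_comm (f := fun c c' => if c ∈ Z (I c') then 1 else 0)] at hsum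
  have e1 : ∑ c ∈ C, ∑ c' ∈ C, (if c = c' then 1 else 0) = C.card := by
    simp
  have e2 : ∑ c ∈ C, ∑ c' ∈ C, (1 : ℕ) = C.card * C.card := by simp
  rw [e1, e2] at hsum
  have e3 : C.card * (d - A.card) ≤ ∑ c ∈ C, ∑ c' ∈ C, (if c' ∈ Z (I c) then 1 else 0) := by
    rw [← smul_eq_mul]
    refine Finset.card_nsmul_le_sum _ _ _ fun c hc => ?_
    have := hcard c hc
    rw [Finset.card_filter] at this
    omega
  have hq : 0 < C.card := Finset.card_pos.2 hC
  have e4 : C.card * (2 * (d - A.card)) ≤ C.card * (C.card + 1) := by nlinarith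
  have e5 := Nat.le_of_mul_le_mul_left e4 hq
  omega

lemma upper_main {σ ι : Type*} [Fintype σ] [DecidableEq σ] [Fintype ι] (A B C : Finset σ)
    (hAB : Disjoint A B) (hAC : Disjoint A C) (hBC : Disjoint B C)
    (hU : ∀ j, j ∈ A ∨ j ∈ B ∨ j ∈ C) (hA : A.Nonempty) (hB : B.Nonempty) (hC : C.Nonempty)
    (hle : B.card ≤ C.card)
    (u : ι → σ → ℕ) (Z : ι → Finset σ) (d : ℕ)
    (hd : ∀ i, d ≤ (Z i).card)
    (hgood : ∀ i a, MemS (u i) (Z i) a → GoodE A B C a)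
    (hcov : ∀ a, GoodE A B C a → ∃ i, MemS (u i) (Z i) a)
    (hdis : ∀ i j a, MemS (u i) (Z i) a → MemS (u j) (Z j) a → i = j) :
    d ≤ A.card + min B.card ((C.card + 1) / 2) := by
  obtain ⟨N, hN⟩ : ∃ N, ∀ i j, u i j < N := by
    refine ⟨(∑ i, ∑ j, u i j) + 1, fun i j => Nat.lt_succ_of_le ?_⟩
    calc u i j ≤ ∑ j, u i j := Finset.single_le_sum (f := fun j => u i j) (by simp) (by simp)
      _ ≤ _ := Finset.single_le_sum (f := fun i => ∑ j, u i j) (by simp) (by simp)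
  have hAB' := Finset.disjoint_left.1 hAB
  have hAC' := Finset.disjoint_left.1 hAC
  have hBC' := Finset.disjoint_left.1 hBC
  obtain ⟨a0, ha0⟩ := id hA
  obtain ⟨b0, hb0⟩ := id hB
  have h1 : d ≤ A.card + B.card := by
    obtain ⟨i, hi⟩ := hcov (fun j => if j ∈ C then 0 else N)
      (Or.inr (Or.inr fun j hj => by simp [hj]))
    have hN0 := hN i a0
    refine (hd i).trans ((Finset.card_le_card ?_).trans (Finset.card_union_le _ _))
    intro c hc
    rcases hU c with h | h | h
    · simp [h]
    · simp [h]
    · exfalso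
      have hm : MemS (u i) (Z i) (fun j => (if j ∈ C then 0 else N) + if j = c then 1 else 0) := by
        refine ⟨fun j => (hi.1 j).trans (Nat.le_add_right _ _), fun j hj => ?_⟩
        have : j ≠ c := by rintro rfl; exact hj hc
        simpa only [this, if_false, add_zero] using hi.2 j hj
      rcases hgood _ _ hm with h' | h' | h'
      · have := h' a0 ha0
        simp only [hAC' ha0, if_false] at this
        omega
      · have := h' b0 hb0
        simp only [hBC' hb0, if_false] at this
        omega
      · have := h' c h
        simp at this
  obtain ⟨i0, h0⟩ := hcov (fun j => if j ∈ A then N else 0)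
    (Or.inr (Or.inl fun j hj => by
      have : j ∉ A := fun h => hAB' h hj
      simp [this]))
  have hN0 := hN i0 a0
  have h2 : d ≤ A.card + (C.card + 1) / 2 := by
    by_cases hZ : Disjoint (Z i0) C
    · exact upper_aux A B C hAB hAC hBC hU hA hC u Z N d hN hd hgood hcov hdis i0 h0 hZ
    · have hZ' : Disjoint (Z i0) B := by
        rw [Finset.disjoint_left]
        intro b hb hbB
        apply hZ
        rw [Finset.disjoint_left]
        intro c hc hcC
        have hm : MemS (u i0) (Z i0) (fun j => (if j ∈ A then N else 0) +
            (if j = b then 1 else 0) + if j = c then 1 else 0) := by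
          refine ⟨fun j => (h0.1 j).trans (by dsimp only; omega), fun j hj => ?_⟩
          have e1 : j ≠ c := by rintro rfl; exact hj hc
          have e2 : j ≠ b := by rintro rfl; exact hj hb
          simpa only [e1, e2, if_false, add_zero] using h0.2 j hj
        rcases hgood _ _ hm with h' | h' | h'
        · have := h' a0 ha0
          simp only [ha0, if_true] at this
          omega
        · have := h' b hbB
          simp at this
        · have := h' c hcC
          simp at this
      have hsw : ∀ a, GoodE A C B a ↔ GoodE A B C a := fun a => by
        unfold GoodE; tauto
      have := upper_aux A C B hAC hAB hBC.symm (fun j => by have := hU j; tauto) hA hB u Z N d hN hd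
        (fun i a h => (hsw a).2 (hgood i a h)) (fun a h => hcov a ((hsw a).1 h)) hdis i0 h0 hZ'
      omega
  omega

lemma lower_main {σ : Type} [Fintype σ] [DecidableEq σ] (A B C : Finset σ)
    (hAB : Disjoint A B) (hAC : Disjoint A C) (hBC : Disjoint B C)
    (hU : ∀ j, j ∈ A ∨ j ∈ B ∨ j ∈ C) (hle : A.card ≤ (B.card + 1) / 2) :
    ∃ (ι : Type) (_ : Fintype ι) (_ : Nonempty ι) (X Y : ι → Finset σ),
      (∀ i, X i ⊆ Y i) ∧ (∀ i, Disjoint (Y i) A ∨ Disjoint (Y i) B ∨ Disjoint (Y i) C) ∧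
      (∀ i, A.card + min B.card ((C.card + 1) / 2) ≤ (Y i).card) ∧
      (∀ T : Finset σ, Disjoint T A ∨ Disjoint T B ∨ Disjoint T C → ∃ i, X i ⊆ T ∧ T ⊆ Y i) ∧
      (∀ (T : Finset σ) i j, X i ⊆ T → T ⊆ Y i → X j ⊆ T → T ⊆ Y j → i = j) := by
  obtain ⟨β, _, XB, YB, b1, b2, b3, b4, b5, b6⟩ := hasIP B
  obtain ⟨γ, _, XC, YC, c1, c2, c3, c4, c5, c6⟩ := hasIP C
  have dAB := Finset.disjoint_left.1 hAB
  have dAC := Finset.disjoint_left.1 hAC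
  have dBC := Finset.disjoint_left.1 hBC
  -- intersections
  have subC : ∀ (i : γ) (T V : Finset σ), T ⊆ V ∪ YC i → Disjoint V C → T ∩ C ⊆ YC i := by
    intro i T V h hV x hx
    rw [Finset.mem_inter] at hx
    rcases Finset.mem_union.1 (h hx.1) with h' | h'
    · exact absurd hx.2 (Finset.disjoint_left.1 hV h')
    · exact h'
  have subB : ∀ (i : β) (j : γ) (T : Finset σ), T ⊆ YB i ∪ YC j → T ∩ B ⊆ YB i := by
    intro i j T h x hx
    rw [Finset.mem_inter] at hx
    rcases Finset.mem_union.1 (h hx.1) with h' | h'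
    · exact h'
    · exact absurd (c2 _ h') (dBC hx.2)
  refine ⟨Unit ⊕ (γ ⊕ β × γ), inferInstance, ⟨Sum.inl ()⟩,
    Sum.elim (fun _ => ∅) (Sum.elim XC (fun p => XB p.1 ∪ XC p.2)),
    Sum.elim (fun _ => A ∪ B) (Sum.elim (fun i => A ∪ YC i) (fun p => YB p.1 ∪ YC p.2)),
    ?_, ?_, ?_, ?_, ?_⟩
  · rintro (_ | i | ⟨i, j⟩)
    · simp
    · exact (c1 i).trans Finset.subset_union_right
    · exact Finset.union_subset_union (b1 i) (c1 j)
  · rintro (_ | i | ⟨i, j⟩)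
    · right; right
      exact Finset.disjoint_union_left.2 ⟨hAC, hBC⟩
    · right; left
      exact Finset.disjoint_union_left.2 ⟨hAB, (hBC.mono_right (c2 i)).symm⟩
    · left
      exact Finset.disjoint_union_left.2 ⟨(hAB.mono_right (b2 i)).symm, (hAC.mono_right (c2 j)).symm⟩
  · rintro (_ | i | ⟨i, j⟩)
    · simp only [Sum.elim_inl]
      rw [Finset.card_union_of_disjoint hAB]; omega
    · simp only [Sum.elim_inl, Sum.elim_inr]
      rw [Finset.card_union_of_disjoint (hAC.mono_right (c2 i))]
      have := c4 i
      omega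
    · simp only [Sum.elim_inr]
      rw [Finset.card_union_of_disjoint (hBC.mono (b2 i) (c2 j))]
      have := c4 j
      have := b4 i
      omega
  · intro T hT
    by_cases hTC : (T ∩ C).Nonempty
    · obtain ⟨j, hj1, hj2⟩ := c5 _ Finset.inter_subset_right hTC
      by_cases hTB : (T ∩ B).Nonempty
      · obtain ⟨i, hi1, hi2⟩ := b5 _ Finset.inter_subset_right hTB
        refine ⟨Sum.inr (Sum.inr (i, j)), Finset.union_subset
          (hi1.trans Finset.inter_subset_left) (hj1.trans Finset.inter_subset_left), ?_⟩
        intro x hx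
        simp only [Sum.elim_inr, Finset.mem_union]
        rcases hU x with h | h | h
        · exfalso
          rcases hT with hT | hT | hT
          · exact Finset.disjoint_left.1 hT hx h
          · rw [Finset.disjoint_iff_inter_eq_empty.1 hT] at hTB; simp at hTB
          · rw [Finset.disjoint_iff_inter_eq_empty.1 hT] at hTC; simp at hTC
        · exact Or.inl (hi2 (Finset.mem_inter.2 ⟨hx, h⟩))
        · exact Or.inr (hj2 (Finset.mem_inter.2 ⟨hx, h⟩))
      · refine ⟨Sum.inr (Sum.inl j), hj1.trans Finset.inter_subset_left, ?_⟩
        intro x hx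
        simp only [Sum.elim_inr, Sum.elim_inl, Finset.mem_union]
        rcases hU x with h | h | h
        · exact Or.inl h
        · exact absurd ⟨x, Finset.mem_inter.2 ⟨hx, h⟩⟩ hTB
        · exact Or.inr (hj2 (Finset.mem_inter.2 ⟨hx, h⟩))
    · refine ⟨Sum.inl (), by simp, ?_⟩
      intro x hx
      simp only [Sum.elim_inl, Finset.mem_union]
      rcases hU x with h | h | h
      · exact Or.inl h
      · exact Or.inr h
      · exact absurd ⟨x, Finset.mem_inter.2 ⟨hx, h⟩⟩ hTC
  · have k1 : ∀ (T : Finset σ) (j : γ), T ⊆ A ∪ B → XC j ⊆ T → False := by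
      intro T j h1 h2
      obtain ⟨x, hx⟩ := c3 j
      have hxC := c2 j (c1 j hx)
      rcases Finset.mem_union.1 (h1 (h2 hx)) with h | h
      · exact dAC h hxC
      · exact dBC h hxC
    have k2 : ∀ (T : Finset σ) (i : β) (j : γ), T ⊆ A ∪ YC j → XB i ⊆ T → False := by
      intro T i j h1 h2
      obtain ⟨x, hx⟩ := b3 i
      have hxB := b2 i (b1 i hx)
      rcases Finset.mem_union.1 (h1 (h2 hx)) with h | h
      · exact dAB h hxB
      · exact dBC hxB (c2 j h)
    rintro T (_ | i | ⟨i, j⟩) (_ | i' | ⟨i', j'⟩) h1 h2 h3 h4 <;>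
      simp only [Sum.elim_inl, Sum.elim_inr, Finset.union_subset_iff] at h1 h2 h3 h4
    · rfl
    · exact (k1 _ _ h2 h3).elim
    · exact (k1 _ _ h2 h3.2).elim
    · exact (k1 _ _ h4 h1).elim
    · rw [c6 (T ∩ C) i i' (Finset.subset_inter h1 ((c1 i).trans (c2 i))) (subC i T A h2 hAC)
        (Finset.subset_inter h3 ((c1 i').trans (c2 i'))) (subC i' T A h4 hAC)]
    · exact (k2 _ _ _ h2 h3.1).elim
    · exact (k1 _ _ h4 h1.2).elim
    · exact (k2 _ _ _ h4 h1.1).elim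
    · rw [c6 (T ∩ C) j j' (Finset.subset_inter h1.2 ((c1 j).trans (c2 j)))
          (subC j T _ h2 (hBC.mono_left (b2 i)))
          (Finset.subset_inter h3.2 ((c1 j').trans (c2 j'))) (subC j' T _ h4 (hBC.mono_left (b2 i'))),
        b6 (T ∩ B) i i' (Finset.subset_inter h1.1 ((b1 i).trans (b2 i))) (subB i j T h2)
          (Finset.subset_inter h3.1 ((b1 i').trans (b2 i'))) (subB i' j' T h4)]

lemma stanleySpace_eq (K : Type*) [Field K] {σ : Type*} (u : σ →₀ ℕ) (Z : Finset σ) :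
    stanleySpace K u (Z : Set σ) = restrictSupport K {a : σ →₀ ℕ | MemS u Z a} := by
  rw [restrictSupport_eq_span, stanleySpace]
  congr 1
  ext f
  simp only [Set.mem_image, Set.mem_setOf_eq]
  constructor
  · rintro ⟨v, hv, rfl⟩
    refine ⟨u + v, ⟨fun j => by simp, fun j hj => ?_⟩, rfl⟩
    have : v j = 0 := by
      by_contra h
      exact hj (hv (Finsupp.mem_support_iff.2 h))
    simp [this]
  · rintro ⟨a, ⟨h1, h2⟩, rfl⟩
    refine ⟨a - u, ?_, ?_⟩
    · intro j hj
      by_contra hn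
      have := h2 j hn
      simp [this] at hj
    · have : u + (a - u) = a := by
        ext j
        have := h1 j
        simp only [Finsupp.add_apply, Finsupp.tsub_apply]
        omega
      rw [this]

lemma iSup_stanleySpace_le {K σ ι : Type*} [Field K] (p : ι → Prop)
    (u : ι → σ →₀ ℕ) (Z : ι → Finset σ) :
    (⨆ i, ⨆ (_ : p i), stanleySpace K (u i) (Z i : Set σ)) ≤
      restrictSupport K {a : σ →₀ ℕ | ∃ i, p i ∧ MemS (u i) (Z i) a} := by
  refine iSup₂_le fun i hi => ?_
  rw [stanleySpace_eq]
  exact restrictSupport_mono K fun a ha => ⟨i, hi, ha⟩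

lemma decomp_iff {K σ : Type*} [Field K] {ι : Type} [Fintype ι] (G : (σ → ℕ) → Prop)
    (I : Ideal (MvPolynomial σ K))
    (hI : ∀ f : MvPolynomial σ K, f ∈ I ↔ ∀ m ∈ f.support, ¬ G m)
    (u : ι → σ →₀ ℕ) (Z : ι → Finset σ) :
    IsStanleyDecompOfQuotient I u Z ↔
      (∀ i (a : σ →₀ ℕ), MemS (u i) (Z i) a → G a) ∧
      (∀ a : σ →₀ ℕ, G a → ∃ i, MemS (u i) (Z i) a) ∧
      (∀ i j (a : σ →₀ ℕ), MemS (u i) (Z i) a → MemS (u j) (Z j) a → i = j) := by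
  classical
  have hmono : ∀ a : σ →₀ ℕ, (monomial a (1 : K)) ∈ I ↔ ¬ G a := by
    intro a
    rw [hI, support_monomial]
    simp
  have hin : ∀ i (a : σ →₀ ℕ), MemS (u i) (Z i) a →
      monomial a (1 : K) ∈ stanleySpace K (u i) (Z i : Set σ) := by
    intro i a ha
    rw [stanleySpace_eq, monomial_mem_restrictSupport]
    exact Or.inl ha
  have hsup : ∀ i (f : MvPolynomial σ K), f ∈ stanleySpace K (u i) (Z i : Set σ) →
      ∀ a ∈ f.support, MemS (u i) (Z i) a := by
    intro i f hf a ha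
    rw [stanleySpace_eq, mem_restrictSupport_iff] at hf
    exact hf ha
  have hmk : ∀ f : MvPolynomial σ K, (Ideal.Quotient.mkₐ K I).toLinearMap f = 0 ↔ f ∈ I := by
    intro f
    simpa using Ideal.Quotient.eq_zero_iff_mem
  have hmk2 : ∀ f g : MvPolynomial σ K, (Ideal.Quotient.mkₐ K I).toLinearMap f =
      (Ideal.Quotient.mkₐ K I).toLinearMap g ↔ f - g ∈ I := by
    intro f g
    rw [← hmk, map_sub, sub_eq_zero]
  constructor
  · rintro ⟨h1, h2, h3⟩
    have good : ∀ i (a : σ →₀ ℕ), MemS (u i) (Z i) a → G a := by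
      intro i a ha
      by_contra hG
      have := Submodule.disjoint_def.1 (h1 i) (monomial a 1) (hin i a ha) ((hmono a).2 hG)
      simp at this
    refine ⟨good, ?_, ?_⟩
    · intro a ha
      have hm : (Ideal.Quotient.mkₐ K I).toLinearMap (monomial a 1) ∈
          (⊤ : Submodule K (MvPolynomial σ K ⧸ I)) := trivial
      rw [← h3, ← Submodule.map_iSup] at hm
      obtain ⟨f, hf, hfe⟩ := hm
      have hf' := iSup_stanleySpace_le (K := K) (fun _ => True) u Z (by simpa using hf)
      rw [mem_restrictSupport_iff] at hf'
      by_contra hno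
      have hfa : coeff a f = 0 := by
        by_contra hne
        obtain ⟨i, -, hi⟩ := hf' (mem_support_iff.2 hne)
        exact hno ⟨i, hi⟩
      have hs := (hmk2 _ _).1 hfe
      rw [hI] at hs
      refine hs a ?_ ha
      rw [mem_support_iff, coeff_sub, hfa, coeff_monomial]
      simp
    · intro i j a hi hj
      by_contra hij
      have hd := h2.pairwiseDisjoint hij
      have := Submodule.disjoint_def.1 hd ((Ideal.Quotient.mkₐ K I).toLinearMap (monomial a 1))
        (Submodule.mem_map_of_mem (hin i a hi)) (Submodule.mem_map_of_mem (hin j a hj))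
      rw [hmk, hmono] at this
      exact this (good i a hi)
  · rintro ⟨good, cov, dis⟩
    refine ⟨fun i => ?_, fun i => ?_, ?_⟩
    · rw [Submodule.disjoint_def]
      intro f hf hfI
      by_contra hne
      obtain ⟨a, ha⟩ := Finset.nonempty_iff_ne_empty.2 (mt support_eq_empty.1 hne)
      exact (hI f).1 hfI a ha (good i a (hsup i f hf a ha))
    · simp only [← Submodule.map_iSup]
      rw [Submodule.disjoint_def]
      rintro _ ⟨f, hf, rfl⟩ ⟨g, hg, hgf⟩
      rw [hmk2, hI] at hgf
      have hg' := iSup_stanleySpace_le (K := K) (fun j => j ≠ i) u Z hg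
      rw [mem_restrictSupport_iff] at hg'
      have hf0 : f = 0 := by
        by_contra hne
        obtain ⟨a, ha⟩ := Finset.nonempty_iff_ne_empty.2 (mt support_eq_empty.1 hne)
        have hia := hsup i f hf a ha
        have hga : coeff a g = 0 := by
          by_contra hne
          obtain ⟨j, hj, hja⟩ := hg' (mem_support_iff.2 hne)
          exact hj (dis j i a hja hia)
        refine hgf a ?_ (good i a hia)
        rw [mem_support_iff] at ha ⊢
        rw [coeff_sub, hga]
        simpa using ha
      simp [hf0]
    · rw [eq_top_iff]
      rintro x -
      obtain ⟨f, rfl⟩ := Ideal.Quotient.mk_surjective x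
      change (Ideal.Quotient.mkₐ K I).toLinearMap f ∈ _
      rw [f.as_sum, map_sum]
      refine Submodule.sum_mem _ fun a _ => ?_
      by_cases ha : G a
      · obtain ⟨i, hi⟩ := cov a ha
        refine Submodule.mem_iSup_of_mem i (Submodule.mem_map_of_mem ?_)
        rw [stanleySpace_eq, monomial_mem_restrictSupport]
        exact Or.inl hi
      · have : (Ideal.Quotient.mkₐ K I).toLinearMap (monomial a (coeff a f)) = 0 := by
          rw [hmk, hI]
          intro m hm
          rw [support_monomial] at hm
          split_ifs at hm
          · simp at hm
          · rw [Finset.mem_singleton.1 hm]; exact ha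
        rw [this]
        exact Submodule.zero_mem _

/-- **Corollary 2.6.** With `P_1, P_2, P_3` as in Corollary 2.2, if `r ≤ ⌈e/2⌉` then
`sdepth S/I = r + min(e, ⌈q/2⌉)`. -/
theorem sdepth_quot_eq_three_disjoint_primes {K : Type*} [Field K] {r e q n : ℕ}
    (hr : 0 < r) (hre : r ≤ e) (heq : e ≤ q) (hn : r + e + q = n)
    (hre2 : r ≤ (e + 1) / 2)
    (P₁ P₂ P₃ I : Ideal (MvPolynomial (Fin n) K))
    (hP₁ : P₁ = Ideal.span
      ((fun j => (X j : MvPolynomial (Fin n) K)) '' {i : Fin n | (i : ℕ) < r}))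
    (hP₂ : P₂ = Ideal.span
      ((fun j => (X j : MvPolynomial (Fin n) K)) '' {i : Fin n | r ≤ (i : ℕ) ∧ (i : ℕ) < r + e}))
    (hP₃ : P₃ = Ideal.span
      ((fun j => (X j : MvPolynomial (Fin n) K)) '' {i : Fin n | r + e ≤ (i : ℕ)}))
    (hI : I = P₁ ⊓ P₂ ⊓ P₃) :
    sdepthQuot I = r + min e ((q + 1) / 2) := by
  have hfI : ∀ f : MvPolynomial (Fin n) K, f ∈ I ↔ ∀ m ∈ f.support,
      ¬ GoodE (Finset.univ.filter fun i : Fin n => (i : ℕ) < r)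
        (Finset.univ.filter fun i : Fin n => r ≤ (i : ℕ) ∧ (i : ℕ) < r + e)
        (Finset.univ.filter fun i : Fin n => r + e ≤ (i : ℕ)) m := by
    intro f
    subst hI hP₁ hP₂ hP₃
    rw [Ideal.mem_inf, Ideal.mem_inf]
    have h1 := fun s : Set (Fin n) => mem_ideal_span_X_image (R := K) (x := f) (s := s)
    rw [h1, h1, h1]
    simp only [GoodE, Finset.mem_filter, Finset.mem_univ, true_and, Set.mem_setOf_eq, not_or,
      not_forall, exists_prop]
    exact ⟨fun h m hm => ⟨h.1.1 m hm, h.1.2 m hm, h.2 m hm⟩,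
      fun h => ⟨⟨fun m hm => (h m hm).1, fun m hm => (h m hm).2.1⟩, fun m hm => (h m hm).2.2⟩⟩
  have cA : (Finset.univ.filter fun i : Fin n => (i : ℕ) < r).card = r := by
    rw [Fin.card_filter_val_lt]; omega
  have cAB : (Finset.univ.filter fun i : Fin n => (i : ℕ) < r + e).card = r + e := by
    rw [Fin.card_filter_val_lt]; omega
  have hAB : Disjoint (Finset.univ.filter fun i : Fin n => (i : ℕ) < r)
      (Finset.univ.filter fun i : Fin n => r ≤ (i : ℕ) ∧ (i : ℕ) < r + e) := by
    rw [Finset.disjoint_left]; intro j; simp; omega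
  have hAC : Disjoint (Finset.univ.filter fun i : Fin n => (i : ℕ) < r)
      (Finset.univ.filter fun i : Fin n => r + e ≤ (i : ℕ)) := by
    rw [Finset.disjoint_left]; intro j; simp; omega
  have hBC : Disjoint (Finset.univ.filter fun i : Fin n => r ≤ (i : ℕ) ∧ (i : ℕ) < r + e)
      (Finset.univ.filter fun i : Fin n => r + e ≤ (i : ℕ)) := by
    rw [Finset.disjoint_left]; intro j; simp
  have cB : (Finset.univ.filter fun i : Fin n => r ≤ (i : ℕ) ∧ (i : ℕ) < r + e).card = e := by
    have h := Finset.card_union_of_disjoint hAB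
    have h2 : (Finset.univ.filter fun i : Fin n => (i : ℕ) < r) ∪
      (Finset.univ.filter fun i : Fin n => r ≤ (i : ℕ) ∧ (i : ℕ) < r + e) =
      (Finset.univ.filter fun i : Fin n => (i : ℕ) < r + e) := by
      ext j; simp; omega
    rw [h2, cAB, cA] at h
    omega
  have cC : (Finset.univ.filter fun i : Fin n => r + e ≤ (i : ℕ)).card = q := by
    have h := Finset.card_filter_add_card_filter_not (s := (Finset.univ : Finset (Fin n)))
      (fun i : Fin n => (i : ℕ) < r + e)
    simp only [not_lt] at h
    rw [cAB, Finset.card_univ, Fintype.card_fin] at h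
    omega
  have hU : ∀ j : Fin n, j ∈ (Finset.univ.filter fun i : Fin n => (i : ℕ) < r) ∨
      j ∈ (Finset.univ.filter fun i : Fin n => r ≤ (i : ℕ) ∧ (i : ℕ) < r + e) ∨
      j ∈ (Finset.univ.filter fun i : Fin n => r + e ≤ (i : ℕ)) := by
    intro j; simp; omega
  generalize (Finset.univ.filter fun i : Fin n => (i : ℕ) < r) = A at *
  generalize (Finset.univ.filter fun i : Fin n => r ≤ (i : ℕ) ∧ (i : ℕ) < r + e) = B at *
  generalize (Finset.univ.filter fun i : Fin n => r + e ≤ (i : ℕ)) = C at *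
  apply IsGreatest.csSup_eq
  constructor
  · obtain ⟨ι, i1, i2, X, Y, h1, h2, h3, h4, h5⟩ := lower_main A B C hAB hAC hBC hU (by omega)
    rw [cA, cB, cC] at h3
    have hmem : ∀ i (a : Fin n →₀ ℕ), MemS (Finsupp.indicator (X i) fun _ _ => 1) (Y i) a ↔
        X i ⊆ a.support ∧ a.support ⊆ Y i := by
      intro i a
      constructor
      · rintro ⟨ha, hb⟩
        constructor
        · intro j hj
          have := ha j
          simp only [Finsupp.indicator_apply, hj, dite_true] at this
          simp only [Finsupp.mem_support_iff]; omega
        · intro j hj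
          by_contra hn
          have := hb j hn
          have hx : j ∉ X i := fun h => hn (h1 i h)
          simp only [Finsupp.indicator_apply, hx, dite_false] at this
          simp [this] at hj
      · rintro ⟨ha, hb⟩
        constructor
        · intro j
          by_cases hj : j ∈ X i
          · have := ha hj
            simp only [Finsupp.mem_support_iff] at this
            simp only [Finsupp.indicator_apply, hj, dite_true]; omega
          · simp [Finsupp.indicator_apply, hj]
        · intro j hj
          have hx : j ∉ X i := fun h => hj (h1 i h)
          have hs : j ∉ a.support := fun h => hj (hb h)
          simp only [Finsupp.mem_support_iff, not_not] at hs
          simp [Finsupp.indicator_apply, hx, hs]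
    have hgd : ∀ a : Fin n →₀ ℕ, GoodE A B C a ↔
        Disjoint a.support A ∨ Disjoint a.support B ∨ Disjoint a.support C := by
      intro a
      have : ∀ D : Finset (Fin n), Disjoint a.support D ↔ ∀ j ∈ D, a j = 0 := by
        intro D
        rw [disjoint_comm, Finset.disjoint_left]
        simp
      rw [this, this, this]; rfl
    refine ⟨ι, i1, i2, fun i => Finsupp.indicator (X i) fun _ _ => 1, Y, ?_, h3⟩
    rw [decomp_iff (GoodE A B C) I hfI]
    refine ⟨fun i a ha => ?_, fun a ha => ?_, fun i j a ha hb => ?_⟩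
    · rw [hmem] at ha
      rw [hgd]
      rcases h2 i with h | h | h
      · exact Or.inl (h.mono_left ha.2)
      · exact Or.inr (Or.inl (h.mono_left ha.2))
      · exact Or.inr (Or.inr (h.mono_left ha.2))
    · obtain ⟨i, hi⟩ := h4 a.support ((hgd a).1 ha)
      exact ⟨i, (hmem i a).2 hi⟩
    · rw [hmem] at ha hb
      exact h5 a.support i j ha.1 ha.2 hb.1 hb.2
  · rintro d ⟨ι, i1, i2, u, Z, hdec, hd⟩
    rw [decomp_iff (GoodE A B C) I hfI] at hdec
    obtain ⟨h1, h2, h3⟩ := hdec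
    have := upper_main A B C hAB hAC hBC hU (Finset.card_pos.1 (by omega))
      (Finset.card_pos.1 (by omega)) (Finset.card_pos.1 (by omega)) (by omega)
      (fun i => u i) Z d hd
      (fun i a h => h1 i (Finsupp.equivFunOnFinite.symm a) h)
      (fun a h => h2 (Finsupp.equivFunOnFinite.symm a) h)
      (fun i j a h h' => h3 i j (Finsupp.equivFunOnFinite.symm a) h h')
    rwa [cA, cB, cC] at this
end

section
/- Let 0 < u < t < n be integers, let P_1 = (x_1,…,x_t), P_2 = (x_{u+1},…,x_n), P_3 = (x_{t+1},…,x_n, x_1,…,x_u) be prime ideals of S = K[x_1,…,x_n], and let I = P_1 ∩ P_2 ∩ P_3. Then sdepth_S(I) ≤ 2 + [ C(n,3) − C(u,3) − C(t−u,3) − C(n−t,3) ] / [ C(n,2) − C(u,2) − C(t−u,2) − C(n−t,2) ], where C(a,b) denotes the binomial coefficient with the convention C(a,b) = 0 when a < b. -/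
open MvPolynomial

namespace SdepthAux

/-- The squarefree exponent vector with support `F`. -/
noncomputable def mon {n : ℕ} (F : Finset (Fin n)) : Fin n →₀ ℕ :=
  Finsupp.equivFunOnFinite.symm (fun i => if i ∈ F then 1 else 0)

lemma mon_apply {n : ℕ} (F : Finset (Fin n)) (i : Fin n) :
    mon F i = if i ∈ F then 1 else 0 := rfl

lemma mon_injective {n : ℕ} {F G : Finset (Fin n)} (h : mon F = mon G) : F = G := by
  ext i
  have := DFunLike.congr_fun h i
  simp only [mon_apply] at this
  split_ifs at this <;> simp_all

lemma monomial_mem_span {K σ : Type*} [Field K] (S : Set (σ →₀ ℕ)) (a : σ →₀ ℕ) :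
    (monomial a (1 : K) : MvPolynomial σ K) ∈
      Submodule.span K ((fun v => (monomial v (1 : K) : MvPolynomial σ K)) '' S) ↔ a ∈ S := by
  constructor
  · intro h
    have key : Submodule.span K ((fun v => (monomial v (1 : K) : MvPolynomial σ K)) '' S) ≤
        restrictSupport K S := by
      rw [Submodule.span_le]
      rintro _ ⟨v, hv, rfl⟩
      change _ ∈ restrictSupport K S
      rw [mem_restrictSupport_iff]
      intro x hx
      have := support_monomial_subset hx
      simp at this
      exact this ▸ hv
    have h2 := key h
    rw [mem_restrictSupport_iff] at h2
    apply h2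
    classical
    rw [Finset.mem_coe, mem_support_iff, coeff_monomial, if_pos rfl]
    exact one_ne_zero
  · intro h
    exact Submodule.subset_span ⟨a, h, rfl⟩

lemma stanley_eq {K σ : Type*} [Field K] (u : σ →₀ ℕ) (Z : Set σ) :
    stanleySpace K u Z = Submodule.span K ((fun v => (monomial v (1 : K) : MvPolynomial σ K)) ''
      {w | ∃ v : σ →₀ ℕ, (v.support : Set σ) ⊆ Z ∧ w = u + v}) := by
  unfold stanleySpace
  congr 1
  ext p
  constructor
  · rintro ⟨v, hv, rfl⟩
    exact ⟨u + v, ⟨v, hv, rfl⟩, rfl⟩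
  · rintro ⟨_, ⟨v, hv, rfl⟩, rfl⟩
    exact ⟨v, hv, rfl⟩

lemma mem_stanley {K σ : Type*} [Field K] (u a : σ →₀ ℕ) (Z : Set σ) :
    (monomial a (1 : K) : MvPolynomial σ K) ∈ stanleySpace K u Z ↔
      ∃ v : σ →₀ ℕ, (v.support : Set σ) ⊆ Z ∧ a = u + v := by
  rw [stanley_eq, monomial_mem_span]; rfl

lemma mem_iSup_stanley {K σ : Type*} [Field K] {ι : Type} (u : ι → σ →₀ ℕ) (Z : ι → Finset σ)
    (a : σ →₀ ℕ)
    (h : (monomial a (1 : K) : MvPolynomial σ K) ∈ ⨆ i, stanleySpace K (u i) (Z i)) :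
    ∃ i, (monomial a (1 : K) : MvPolynomial σ K) ∈ stanleySpace K (u i) (Z i) := by
  simp_rw [stanley_eq] at h
  rw [← Submodule.span_iUnion, ← Set.image_iUnion, monomial_mem_span] at h
  obtain ⟨i, hi⟩ := Set.mem_iUnion.1 h
  exact ⟨i, (mem_stanley _ _ _).2 hi⟩

lemma card_good {α : Type*} [Fintype α] [DecidableEq α] (A B C : Finset α)
    (hAB : Disjoint A B) (hAC : Disjoint A C) (hBC : Disjoint B C) (k : ℕ) (hk : 0 < k) :
    (((Finset.powersetCard k (Finset.univ : Finset α)).filter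
      (fun F => ¬ F ⊆ A ∧ ¬ F ⊆ B ∧ ¬ F ⊆ C)).card : ℚ) =
      ((Fintype.card α).choose k : ℚ) - (A.card.choose k : ℚ) - (B.card.choose k : ℚ)
        - (C.card.choose k : ℚ) := by
  have dis : ∀ X Y : Finset α, Disjoint X Y →
      Disjoint (Finset.powersetCard k X) (Finset.powersetCard k Y) := by
    intro X Y h
    rw [Finset.disjoint_left]
    intro F h1 h2
    rw [Finset.mem_powersetCard] at h1 h2
    have : F = ∅ := by
      have := Finset.disjoint_of_subset_left h1.1 (Finset.disjoint_of_subset_right h2.1 h)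
      simpa using this
    rw [this] at h1
    simp at h1
    omega
  have e : (Finset.powersetCard k (Finset.univ : Finset α)) =
      ((Finset.powersetCard k (Finset.univ : Finset α)).filter
      (fun F => ¬ F ⊆ A ∧ ¬ F ⊆ B ∧ ¬ F ⊆ C)) ∪ (Finset.powersetCard k A ∪
        (Finset.powersetCard k B ∪ Finset.powersetCard k C)) := by
    ext F
    simp only [Finset.mem_union, Finset.mem_filter, Finset.mem_powersetCard, Finset.subset_univ,
      true_and]
    tauto
  have c := congrArg Finset.card e
  rw [Finset.card_union_of_disjoint, Finset.card_union_of_disjoint,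
    Finset.card_union_of_disjoint (dis _ _ hBC)] at c
  · simp only [Finset.card_powersetCard, Finset.card_univ] at c
    rw [c]; push_cast; ring
  · rw [Finset.disjoint_union_right]; exact ⟨dis _ _ hAB, dis _ _ hAC⟩
  · rw [Finset.disjoint_left]
    intro F h1 h2
    simp only [Finset.mem_union, Finset.mem_filter, Finset.mem_powersetCard] at h1 h2
    tauto

lemma main_count {K : Type*} [Field K] {n : ℕ} (A B C : Finset (Fin n))
    (hABC : ∀ i, i ∈ A ∨ i ∈ B ∨ i ∈ C)
    (I : Ideal (MvPolynomial (Fin n) K))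
    (hI : ∀ a : Fin n →₀ ℕ, (monomial a (1 : K) : MvPolynomial (Fin n) K) ∈ I ↔
      (¬ a.support ⊆ A ∧ ¬ a.support ⊆ B ∧ ¬ a.support ⊆ C))
    {ι : Type} [Fintype ι] [Nonempty ι] (u : ι → (Fin n →₀ ℕ)) (Z : ι → Finset (Fin n))
    (hD : IsStanleyDecompOfIdeal I u Z) (d : ℕ) (hd : ∀ i, d ≤ (Z i).card) :
    ((Finset.powersetCard 2 (Finset.univ : Finset (Fin n))).filter
      (fun F => ¬ F ⊆ A ∧ ¬ F ⊆ B ∧ ¬ F ⊆ C)).card * (d - 2) ≤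
    ((Finset.powersetCard 3 (Finset.univ : Finset (Fin n))).filter
      (fun F => ¬ F ⊆ A ∧ ¬ F ⊆ B ∧ ¬ F ⊆ C)).card := by
  obtain ⟨hind, hsup⟩ := hD
  have supp_mon : ∀ F : Finset (Fin n), (mon F).support = F := by
    intro F; ext i; simp [mon_apply]
  have uniq : ∀ i j (a : Fin n →₀ ℕ),
      (monomial a (1 : K) : MvPolynomial (Fin n) K) ∈ stanleySpace K (u i) (Z i) →
      (monomial a (1 : K) : MvPolynomial (Fin n) K) ∈ stanleySpace K (u j) (Z j) → i = j := by
    intro i j a h1 h2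
    by_contra hne
    have := Submodule.disjoint_def.1 (hind.pairwiseDisjoint hne) _ h1 h2
    simp at this
  have uI : ∀ i, ¬ (u i).support ⊆ A ∧ ¬ (u i).support ⊆ B ∧ ¬ (u i).support ⊆ C := by
    intro i
    rw [← hI]
    have : (monomial (u i) (1 : K) : MvPolynomial (Fin n) K) ∈
        ⨆ i, stanleySpace K (u i) (Z i) :=
      Submodule.mem_iSup_of_mem i ((mem_stanley _ _ _).2 ⟨0, by simp, by simp⟩)
    rw [hsup] at this
    exact this
  have good2 : ∀ G : Finset (Fin n), (¬ G ⊆ A ∧ ¬ G ⊆ B ∧ ¬ G ⊆ C) → 2 ≤ G.card := by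
    intro G hG
    by_contra hlt
    have hc : G.card ≤ 1 := by omega
    obtain ⟨y, -, -⟩ := Finset.not_subset.1 hG.1
    have : Nonempty (Fin n) := ⟨y⟩
    rw [Finset.card_le_one_iff_subset_singleton] at hc
    · obtain ⟨x, hx⟩ := hc
      rcases hABC x with h | h | h
      · exact hG.1 (hx.trans (by simpa using h))
      · exact hG.2.1 (hx.trans (by simpa using h))
      · exact hG.2.2 (hx.trans (by simpa using h))
  set P := (Finset.powersetCard 2 (Finset.univ : Finset (Fin n))).filter
      (fun F => ¬ F ⊆ A ∧ ¬ F ⊆ B ∧ ¬ F ⊆ C) with hP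
  have ex : ∀ F : Finset (Fin n), F ∈ P → ∃ i, u i = mon F := by
    intro F hF
    rw [hP, Finset.mem_filter, Finset.mem_powersetCard] at hF
    have h1 : (monomial (mon F) (1 : K) : MvPolynomial (Fin n) K) ∈
        ⨆ i, stanleySpace K (u i) (Z i) := by
      rw [hsup]
      exact (hI _).2 (by rw [supp_mon]; exact hF.2)
    obtain ⟨i, hi⟩ := mem_iSup_stanley u Z _ h1
    obtain ⟨v, -, hv⟩ := (mem_stanley _ _ _).1 hi
    refine ⟨i, ?_⟩
    have hsub : (u i).support ⊆ F := by
      intro j hj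
      have := DFunLike.congr_fun hv j
      rw [mon_apply, Finsupp.add_apply] at this
      rw [Finsupp.mem_support_iff] at hj
      by_contra hjF
      rw [if_neg hjF] at this
      omega
    have heq : (u i).support = F :=
      Finset.eq_of_subset_of_card_le hsub (by rw [hF.1.2]; exact good2 _ (uI i))
    ext j
    have := DFunLike.congr_fun hv j
    rw [mon_apply, Finsupp.add_apply] at this
    rw [mon_apply]
    by_cases hj : j ∈ F
    · have h2 : u i j ≠ 0 := by rw [← Finsupp.mem_support_iff, heq]; exact hj
      rw [if_pos hj] at this ⊢
      omega
    · rw [if_neg hj] at this ⊢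
      omega
  choose! f hf using ex
  let T : Finset (Fin n) → Finset (Finset (Fin n)) :=
    fun F => (Z (f F) \ F).image (fun k => insert k F)
  have hTmem : ∀ F ∈ P, ∀ G ∈ T F,
      (monomial (mon G) (1 : K) : MvPolynomial (Fin n) K) ∈
        stanleySpace K (u (f F)) (Z (f F)) := by
    intro F hF G hG
    obtain ⟨k, hk, rfl⟩ := Finset.mem_image.1 hG
    rw [Finset.mem_sdiff] at hk
    rw [mem_stanley]
    refine ⟨Finsupp.single k 1, ?_, ?_⟩
    · intro x hx
      have := Finsupp.support_single_subset hx
      simp at this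
      rw [this]; exact hk.1
    · rw [hf F hF]
      ext j
      rw [Finsupp.add_apply, mon_apply, mon_apply, Finsupp.single_apply]
      by_cases hjk : k = j
      · subst hjk; simp [hk.2]
      · have : ¬ j = k := fun h => hjk h.symm
        simp [hjk, this]
  have hTcard : ∀ F ∈ P, d - 2 ≤ (T F).card := by
    intro F hF
    have h0 : F.card = 2 := (Finset.mem_powersetCard.1 (Finset.mem_filter.1 hF).1).2
    rw [Finset.card_image_of_injOn]
    · have := Finset.le_card_sdiff F (Z (f F))
      have := hd (f F)
      omega
    · intro x hx y hy hxy
      simp only [Finset.coe_sdiff, Set.mem_sdiff, Finset.mem_coe] at hx hy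
      have : x ∈ insert y F := by
        have hxy' : insert x F = insert y F := hxy
        rw [← hxy']; exact Finset.mem_insert_self _ _
      rcases Finset.mem_insert.1 this with h | h
      · exact h
      · exact absurd h hx.2
  calc P.card * (d - 2) = ∑ F ∈ P, (d - 2) := by simp
    _ ≤ ∑ F ∈ P, (T F).card := Finset.sum_le_sum hTcard
    _ = (P.biUnion T).card := by
      rw [Finset.card_biUnion]
      intro F hF F' hF' hne
      rw [Function.onFun, Finset.disjoint_left]
      intro G h1 h2
      have := uniq _ _ _ (hTmem F hF G h1) (hTmem F' hF' G h2)
      apply hne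
      apply mon_injective
      rw [← hf F hF, ← hf F' hF', this]
    _ ≤ _ := by
      apply Finset.card_le_card
      intro G hG
      obtain ⟨F, hF, hGF⟩ := Finset.mem_biUnion.1 hG
      obtain ⟨k, hk, rfl⟩ := Finset.mem_image.1 hGF
      rw [Finset.mem_sdiff] at hk
      have h0 := Finset.mem_filter.1 hF
      rw [Finset.mem_powersetCard] at h0
      rw [Finset.mem_filter, Finset.mem_powersetCard]
      have hs : F ⊆ insert k F := Finset.subset_insert _ _
      refine ⟨⟨Finset.subset_univ _, ?_⟩, fun h => h0.2.1 (hs.trans h),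
        fun h => h0.2.2.1 (hs.trans h), fun h => h0.2.2.2 (hs.trans h)⟩
      rw [Finset.card_insert_of_notMem hk.2, h0.1.2]

end SdepthAux

/-- **Lemma 3.4.** For `0 < u < t < n`, `P_1 = (x_1,…,x_t)`, `P_2 = (x_{u+1},…,x_n)`,
`P_3 = (x_{t+1},…,x_n,x_1,…,x_u)` and `I = P_1 ∩ P_2 ∩ P_3`, one has
`sdepth I ≤ 2 + (C(n,3)-C(u,3)-C(t-u,3)-C(n-t,3)) / (C(n,2)-C(u,2)-C(t-u,2)-C(n-t,2))`. -/
theorem sdepth_le_binomial_bound {K : Type*} [Field K] {n u t : ℕ}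
    (hu : 0 < u) (hut : u < t) (htn : t < n)
    (P₁ P₂ P₃ I : Ideal (MvPolynomial (Fin n) K))
    (hP₁ : P₁ = Ideal.span
      ((fun j => (X j : MvPolynomial (Fin n) K)) '' {i : Fin n | (i : ℕ) < t}))
    (hP₂ : P₂ = Ideal.span
      ((fun j => (X j : MvPolynomial (Fin n) K)) '' {i : Fin n | u ≤ (i : ℕ)}))
    (hP₃ : P₃ = Ideal.span
      ((fun j => (X j : MvPolynomial (Fin n) K)) ''
        {i : Fin n | (i : ℕ) < u ∨ t ≤ (i : ℕ)}))
    (hI : I = P₁ ⊓ P₂ ⊓ P₃) :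
    (sdepthIdeal I : ℚ) ≤ 2 +
      ((n.choose 3 : ℚ) - (u.choose 3 : ℚ) - ((t - u).choose 3 : ℚ) - ((n - t).choose 3 : ℚ)) /
      ((n.choose 2 : ℚ) - (u.choose 2 : ℚ) - ((t - u).choose 2 : ℚ) - ((n - t).choose 2 : ℚ)) := by
  classical
  set A : Finset (Fin n) := Finset.univ.filter (fun i : Fin n => (i : ℕ) < u) with hA
  set B : Finset (Fin n) := Finset.univ.filter (fun i : Fin n => u ≤ (i : ℕ) ∧ (i : ℕ) < t) with hB
  set C : Finset (Fin n) := Finset.univ.filter (fun i : Fin n => t ≤ (i : ℕ)) with hC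
  have mA : ∀ i : Fin n, i ∈ A ↔ (i : ℕ) < u := by simp [hA]
  have mB : ∀ i : Fin n, i ∈ B ↔ u ≤ (i : ℕ) ∧ (i : ℕ) < t := by simp [hB]
  have mC : ∀ i : Fin n, i ∈ C ↔ t ≤ (i : ℕ) := by simp [hC]
  have cA : A.card = u := by
    rw [← Finset.card_map Fin.valEmbedding]
    have : A.map Fin.valEmbedding = Finset.range u := by
      ext x
      simp only [Finset.mem_map, mA, Fin.valEmbedding_apply, Finset.mem_range]
      exact ⟨by rintro ⟨i, h, rfl⟩; exact h, fun h => ⟨⟨x, by omega⟩, h, rfl⟩⟩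
    rw [this, Finset.card_range]
  have cB : B.card = t - u := by
    rw [← Finset.card_map Fin.valEmbedding]
    have : B.map Fin.valEmbedding = Finset.Ico u t := by
      ext x
      simp only [Finset.mem_map, mB, Fin.valEmbedding_apply, Finset.mem_Ico]
      exact ⟨by rintro ⟨i, h, rfl⟩; exact h, fun h => ⟨⟨x, by omega⟩, h, rfl⟩⟩
    rw [this, Nat.card_Ico]
  have cC : C.card = n - t := by
    rw [← Finset.card_map Fin.valEmbedding]
    have : C.map Fin.valEmbedding = Finset.Ico t n := by
      ext x
      simp only [Finset.mem_map, mC, Fin.valEmbedding_apply, Finset.mem_Ico]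
      exact ⟨by rintro ⟨i, h, rfl⟩; exact ⟨h, i.2⟩, fun h => ⟨⟨x, by omega⟩, h.1, rfl⟩⟩
    rw [this, Nat.card_Ico]
  have hAB : Disjoint A B := by
    rw [Finset.disjoint_left]; intro i; rw [mA, mB]; omega
  have hAC : Disjoint A C := by
    rw [Finset.disjoint_left]; intro i; rw [mA, mC]; omega
  have hBC : Disjoint B C := by
    rw [Finset.disjoint_left]; intro i; rw [mB, mC]; omega
  have hABC : ∀ i, i ∈ A ∨ i ∈ B ∨ i ∈ C := by
    intro i; rw [mA, mB, mC]; omega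
  have gen : ∀ (s : Set (Fin n)) (D : Finset (Fin n)), (∀ i, i ∈ s ↔ i ∉ D) →
      ∀ a : Fin n →₀ ℕ, (monomial a (1 : K) : MvPolynomial (Fin n) K) ∈
        Ideal.span ((fun j => (X j : MvPolynomial (Fin n) K)) '' s) ↔ ¬ a.support ⊆ D := by
    intro s D hs a
    rw [show (fun j => (X j : MvPolynomial (Fin n) K)) = X from rfl, mem_ideal_span_X_image]
    rw [support_monomial, if_neg one_ne_zero, Finset.not_subset]
    simp only [Finset.mem_singleton, forall_eq, hs, Finsupp.mem_support_iff]
    constructor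
    · rintro ⟨i, h1, h2⟩; exact ⟨i, h2, h1⟩
    · rintro ⟨i, h1, h2⟩; exact ⟨i, h2, h1⟩
  have hmem : ∀ a : Fin n →₀ ℕ, (monomial a (1 : K) : MvPolynomial (Fin n) K) ∈ I ↔
      (¬ a.support ⊆ A ∧ ¬ a.support ⊆ B ∧ ¬ a.support ⊆ C) := by
    intro a
    have h1 := gen {i : Fin n | (i : ℕ) < t} C (by intro i; rw [mC, Set.mem_ofPred_eq]; omega) a
    have h2 := gen {i : Fin n | u ≤ (i : ℕ)} A (by intro i; rw [mA, Set.mem_ofPred_eq]; omega) a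
    have h3 := gen {i : Fin n | (i : ℕ) < u ∨ t ≤ (i : ℕ)} B
      (by intro i; rw [mB, Set.mem_ofPred_eq]; omega) a
    rw [hI, Submodule.mem_inf, Submodule.mem_inf, hP₁, hP₂, hP₃, h1, h2, h3]
    tauto
  have c2 := SdepthAux.card_good A B C hAB hAC hBC 2 (by norm_num)
  have c3 := SdepthAux.card_good A B C hAB hAC hBC 3 (by norm_num)
  rw [cA, cB, cC, Fintype.card_fin] at c2 c3
  rw [← c2, ← c3]
  have hpos : 0 < ((Finset.powersetCard 2 (Finset.univ : Finset (Fin n))).filter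
      (fun F => ¬ F ⊆ A ∧ ¬ F ⊆ B ∧ ¬ F ⊆ C)).card := by
    rw [Finset.card_pos]
    refine ⟨{⟨0, by omega⟩, ⟨u, by omega⟩}, ?_⟩
    rw [Finset.mem_filter, Finset.mem_powersetCard]
    refine ⟨⟨Finset.subset_univ _, Finset.card_pair ?_⟩, ?_, ?_, ?_⟩
    · intro h; rw [Fin.mk.injEq] at h; omega
    all_goals
      intro h
      have h1 := h (Finset.mem_insert_self _ _)
      have h2 := h (Finset.mem_insert_of_mem (Finset.mem_singleton_self _))
      simp only [mA, mB, mC] at h1 h2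
      omega
  have hmain := fun {ι : Type} [Fintype ι] [Nonempty ι] (w : ι → (Fin n →₀ ℕ)) (Z : ι → Finset (Fin n))
    (hD : IsStanleyDecompOfIdeal I w Z) (d : ℕ) (hd : ∀ i, d ≤ (Z i).card) =>
      SdepthAux.main_count A B C hABC I hmem w Z hD d hd
  generalize ((Finset.powersetCard 2 (Finset.univ : Finset (Fin n))).filter
      (fun F => ¬ F ⊆ A ∧ ¬ F ⊆ B ∧ ¬ F ⊆ C)).card = p at *
  generalize ((Finset.powersetCard 3 (Finset.univ : Finset (Fin n))).filter
      (fun F => ¬ F ⊆ A ∧ ¬ F ⊆ B ∧ ¬ F ⊆ C)).card = q at *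
  have hr : (0 : ℚ) ≤ 2 + (q : ℚ) / (p : ℚ) := by positivity
  rw [← Nat.le_floor_iff hr]
  unfold sdepthIdeal
  apply csSup_le'
  rintro d ⟨ι, _, _, w, Z, hD, hd⟩
  rw [Nat.le_floor_iff hr]
  have h := hmain w Z hD d hd
  have hp' : (0 : ℚ) < p := by exact_mod_cast hpos
  have h' : (p : ℚ) * ((d - 2 : ℕ) : ℚ) ≤ q := by exact_mod_cast h
  have h2 : (d : ℚ) ≤ 2 + ((d - 2 : ℕ) : ℚ) := by
    have : d ≤ 2 + (d - 2) := by omega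
    exact_mod_cast this
  have h3 : ((d - 2 : ℕ) : ℚ) ≤ (q : ℚ) / p := by
    rw [le_div_iff₀ hp']; linarith
  linarith
end
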